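/- Let $n\ge 2$, let $R$ be a commutative ring with a distinguished invertible element $v$ (for example $R=\mathbb Z[v^{\pm1}]$ or $R=\mathbb Q(v)$), and put $q=v^{2n}$, $q^{-1/n}=v^{-2}$. Write $\delta_{i,j}=1$ if $i=j$ and $0$ otherwise, and $\delta_{i<j}=1$ if $i<j$ and $0$ otherwise. Let $\mathcal R$ and the braiding matrix $\widehat{\mathcal R}$ be the $n^2\times n^2$ matrices over $R$, with rows and columns indexed by pairs in $\{1,\dots,n\}^2$, whose entries in row (upper indices) and column (lower indices) are $$\widehat{\mathcal R}^{ji}_{cd}=\mathcal R^{ij}_{cd}=q^{-1/n}\left(q^{\delta_{i,j}}\,\delta_{j,d}\,\delta_{i,c}+(q-q^{-1})\,\delta_{j<i}\,\delta_{j,c}\,\delta_{i,d}\right).$$ Let $\mathcal O_q(M(n))$ be the associative unital $R$-algebra generated by $u^i_j$ $(1\le i,j\le n)$ subject to the relations $(\mathbf u\otimes\mathbf u)\,\widehat{\mathcal R}=\widehat{\mathcal R}\,(\mathbf u\otimes\mathbf u)$, where $(\mathbf u\otimes\mathbf u)^{ik}_{jl}=u^i_ju^k_l$; that is, for all $i,j,k,l\in\{1,\dots,n\}$,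 $$\sum_{a,b=1}^n u^i_a u^k_b\,\widehat{\mathcal R}^{ab}_{jl}=\sum_{a,b=1}^n\widehat{\mathcal R}^{ik}_{ab}\,u^a_j u^b_l .$$ For $\sigma\in S_n$ let $\ell(\sigma)=\#\{(i,j): 1\le i<j\le n,\ \sigma(i)>\sigma(j)\}$. Then the two expansions of the quantum determinant agree in $\mathcal O_q(M(n))$: $$\sum_{\sigma\in S_n}(-q)^{\ell(\sigma)}\,u^1_{\sigma(1)}u^2_{\sigma(2)}\cdots u^n_{\sigma(n)}=\sum_{\sigma\in S_n}(-q)^{\ell(\sigma)}\,u^{\sigma(1)}_1u^{\sigma(2)}_2\cdots u^{\sigma(n)}_n .$$ -/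

import Mathlib

/-!
Quantum matrices over a commutative ring `R` with a distinguished invertible element `v`
(for instance `ℤ[v, v⁻¹]` or `ℚ(v)`), with `q = v ^ (2 n)` and `q ^ (1 / n) = v ^ 2`.
The indices `1, …, n` are realized by `Fin n`.
-/

namespace QuantumMatrix

/-- The quantum parameter `q = v ^ (2 n)`, as a unit of the ground ring. -/
def q {R : Type*} [CommRing R] (v : Rˣ) (n : ℕ) : Rˣ := v ^ (2 * n)

/-- The `R`-matrix `ℛ`; its entry in row `(i, j)` and column `(c, d)` is
`q^{-1/n} (q^{δ_{i,j}} δ_{j,d} δ_{i,c} + (q - q⁻¹) [j < i] δ_{j,c} δ_{i,d})`. -/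
def rMatrix {R : Type*} [CommRing R] (v : Rˣ) (n : ℕ) :
    Matrix (Fin n × Fin n) (Fin n × Fin n) R :=
  fun p r =>
    ((v ^ (-2 : ℤ) : Rˣ) : R) *
      ((if p.1 = p.2 then (q v n : R) else 1) *
          (if p.2 = r.2 then 1 else 0) * (if p.1 = r.1 then 1 else 0) +
        ((q v n : R) - ((q v n)⁻¹ : Rˣ)) * (if p.2 < p.1 then 1 else 0) *
          (if p.2 = r.1 then 1 else 0) * (if p.1 = r.2 then 1 else 0))

/-- The braiding matrix `ℛ̂`: its entry in row `(j, i)` and column `(c, d)` is the entry of `ℛ`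
in row `(i, j)` and column `(c, d)`. -/
def braiding {R : Type*} [CommRing R] (v : Rˣ) (n : ℕ) :
    Matrix (Fin n × Fin n) (Fin n × Fin n) R :=
  fun p r => rMatrix v n p.swap r

/-- The generator `u^i_j` of the free algebra on `n²` generators. -/
def gen (R : Type*) [CommRing R] (n : ℕ) (i j : Fin n) : FreeAlgebra R (Fin n × Fin n) :=
  FreeAlgebra.ι R (i, j)

/-- The relations `(𝐮 ⊗ 𝐮) ℛ̂ = ℛ̂ (𝐮 ⊗ 𝐮)`, entry by entry, where
`(𝐮 ⊗ 𝐮)^{(i,k)}_{(j,l)} = u^i_j u^k_l`. -/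
inductive Rel {R : Type*} [CommRing R] (v : Rˣ) (n : ℕ) :
    FreeAlgebra R (Fin n × Fin n) → FreeAlgebra R (Fin n × Fin n) → Prop
  | rtt (i j k l : Fin n) :
      Rel v n
        (∑ a : Fin n, ∑ b : Fin n, braiding v n (a, b) (j, l) • (gen R n i a * gen R n k b))
        (∑ a : Fin n, ∑ b : Fin n, braiding v n (i, k) (a, b) • (gen R n a j * gen R n b l))

/-- The quantum matrix algebra `𝒪_q(M(n))` over `R`. -/
abbrev OqM {R : Type*} [CommRing R] (v : Rˣ) (n : ℕ) : Type _ := RingQuot (Rel v n)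

/-- The generator `u^i_j` of `𝒪_q(M(n))`. -/
noncomputable def u {R : Type*} [CommRing R] (v : Rˣ) (n : ℕ) (i j : Fin n) : OqM v n :=
  RingQuot.mkAlgHom R (Rel v n) (gen R n i j)

/-- The inversion number of a permutation. -/
def invNum {n : ℕ} (σ : Equiv.Perm (Fin n)) : ℕ :=
  (Finset.univ.filter fun p : Fin n × Fin n => p.1 < p.2 ∧ σ p.2 < σ p.1).card

end QuantumMatrix

namespace QuantumMatrix

/-- Inserting `a` into a list does not change the product of the images under `f`, provided `f a`
commutes with `f b` for every `b` in the list that `a` may have to pass. -/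
theorem prod_map_orderedInsert {ι M : Type*} [Monoid M] (r : ι → ι → Prop) [DecidableRel r]
    (f : ι → M) (a : ι) (l : List ι) (h : ∀ b ∈ l, r a b ∨ Commute (f a) (f b)) :
    ((l.orderedInsert r a).map f).prod = f a * (l.map f).prod := by
  induction l with
  | nil => simp
  | cons b l ih =>
    by_cases hab : r a b
    · simp [List.orderedInsert, hab]
    · have hc : Commute (f a) (f b) := (h b (by simp)).resolve_left hab
      rw [List.orderedInsert, if_neg hab, List.map_cons, List.prod_cons,
        ih fun c hc => h c (by simp [hc]), List.map_cons, List.prod_cons, ← mul_assoc, ← hc.eq,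
        mul_assoc]

/-- Sorting a list does not change the product of the images under `f`, provided the images of
any two entries that are out of order commute. -/
theorem prod_map_insertionSort {ι M : Type*} [Monoid M] (r : ι → ι → Prop) [DecidableRel r]
    (f : ι → M) (l : List ι) (h : l.Pairwise fun a b => r a b ∨ Commute (f a) (f b)) :
    ((l.insertionSort r).map f).prod = (l.map f).prod := by
  induction l with
  | nil => rfl
  | cons a l ih =>
    rw [List.pairwise_cons] at h
    rw [List.insertionSort_cons, prod_map_orderedInsert, ih h.2, List.map_cons, List.prod_cons]
    intro b hb
    exact h.1 b ((List.perm_insertionSort r l).mem_iff.1 hb)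

/-- A product over `Fin n` may be reordered along `σ⁻¹` if the factors at every inversion of `σ`
commute. -/
theorem prod_map_finRange_perm_symm {M : Type*} [Monoid M] {n : ℕ} (σ : Equiv.Perm (Fin n))
    (f : Fin n → M) (h : ∀ a b, a < b → σ b < σ a → Commute (f a) (f b)) :
    ((List.finRange n).map fun r => f (σ⁻¹ r)).prod = ((List.finRange n).map f).prod := by
  let r : Fin n → Fin n → Prop := fun a b => σ a ≤ σ b
  have : Std.Total r := ⟨fun a b => le_total (σ a) (σ b)⟩
  have : IsTrans (Fin n) r := ⟨fun a b c => le_trans⟩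
  have hs : (List.finRange n).insertionSort r = (List.finRange n).map ⇑σ⁻¹ := by
    refine List.Perm.eq_of_pairwise (le := r) ?_ (List.pairwise_insertionSort r _) ?_ ?_
    · intro a b _ _ hab hba
      exact σ.injective (le_antisymm hab hba)
    · rw [List.pairwise_map]
      refine (List.pairwise_lt_finRange n).imp fun {a b} hab => ?_
      simpa [r] using hab.le
    · refine (List.perm_insertionSort r _).trans ?_
      rw [List.perm_ext_iff_of_nodup (List.nodup_finRange n)
        ((List.nodup_finRange n).map (σ⁻¹).injective)]
      intro a
      simpa using ⟨σ a, by simp⟩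
  rw [← prod_map_insertionSort r f (List.finRange n), hs, List.map_map]
  · rfl
  · refine (List.pairwise_lt_finRange n).imp fun {a b} hab => ?_
    rcases le_or_gt (σ a) (σ b) with hle | hlt
    · exact Or.inl hle
    · exact Or.inr (h a b hab hlt)

/-- Inverting a permutation preserves the inversion number. -/
theorem invNum_inv {n : ℕ} (σ : Equiv.Perm (Fin n)) : invNum σ⁻¹ = invNum σ := by
  refine Finset.card_bij' (fun p _ => (σ⁻¹ p.2, σ⁻¹ p.1)) (fun p _ => (σ p.2, σ p.1)) ?_ ?_ ?_ ?_
  all_goals simp +contextual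

/-- Every generator commutes with the generators that lie strictly below and to the left. -/
theorem commute_u {R : Type*} [CommRing R] (v : Rˣ) (n : ℕ) {i k j l : Fin n} (hik : i < k)
    (hjl : j < l) : Commute (u v n i l) (u v n k j) := by
  have h := RingQuot.mkAlgHom_rel R (Rel.rtt (v := v) i j k l)
  simp only [map_sum, map_smul, map_mul] at h
  change ∑ a, ∑ b, braiding v n (a, b) (j, l) • (u v n i a * u v n k b) =
    ∑ a, ∑ b, braiding v n (i, k) (a, b) • (u v n a j * u v n b l) at h
  have hL : ∑ a, ∑ b, braiding v n (a, b) (j, l) • (u v n i a * u v n k b) =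
      ((v ^ (-2 : ℤ) : Rˣ) : R) • (u v n i l * u v n k j +
        ((q v n : R) - ((q v n)⁻¹ : Rˣ)) • (u v n i j * u v n k l)) := by
    simp only [braiding, rMatrix, Prod.swap_prod_mk, mul_smul, add_smul, smul_add,
      Finset.sum_add_distrib, ite_smul, one_smul, zero_smul, smul_ite, smul_zero,
      Finset.sum_ite_eq', Finset.mem_univ, if_true, hjl, hjl.ne,
      if_false]
  have hR : ∑ a, ∑ b, braiding v n (i, k) (a, b) • (u v n a j * u v n b l) =
      ((v ^ (-2 : ℤ) : Rˣ) : R) • (u v n k j * u v n i l +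
        ((q v n : R) - ((q v n)⁻¹ : Rˣ)) • (u v n i j * u v n k l)) := by
    simp only [braiding, rMatrix, Prod.swap_prod_mk, mul_smul, add_smul, smul_add,
      Finset.sum_add_distrib, ite_smul, one_smul, zero_smul, smul_ite, smul_zero,
      Finset.sum_ite_eq, Finset.mem_univ, if_true, hik, hik.ne',
      if_false]
    rw [Finset.sum_comm]
    simp
  rw [hL, hR, ← Units.smul_def, ← Units.smul_def] at h
  exact add_right_cancel (smul_left_cancel _ h)

end QuantumMatrix

theorem qdet_row_eq_column {R : Type*} [CommRing R] (v : Rˣ) (n : ℕ) (hn : 2 ≤ n) :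
    (∑ σ : Equiv.Perm (Fin n),
        (-(QuantumMatrix.q v n : R)) ^ QuantumMatrix.invNum σ •
          ((List.finRange n).map fun r => QuantumMatrix.u v n r (σ r)).prod) =
      ∑ σ : Equiv.Perm (Fin n),
        (-(QuantumMatrix.q v n : R)) ^ QuantumMatrix.invNum σ •
          ((List.finRange n).map fun r => QuantumMatrix.u v n (σ r) r).prod := by
  refine Fintype.sum_equiv (Equiv.inv _) _ _ fun σ => ?_
  rw [Equiv.inv_apply, QuantumMatrix.invNum_inv]
  congr 1
  have h := QuantumMatrix.prod_map_finRange_perm_symm σ⁻¹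
    (fun r => QuantumMatrix.u v n (σ⁻¹ r) r)
    fun a b hab hba => (QuantumMatrix.commute_u v n hba hab).symm
  simpa using h
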